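/- arXiv:1106.2213 — 2 statements merged into one kernel-verified Lean document; each statement's English description precedes it below -/
import Mathlib

section
/- Let Z be an n×n positive semidefinite complex matrix and k ∈ {1,…,n}. Then the sum of the k smallest eigenvalues of Z, ‖Z‖_{{k}} := ∑_{j=1}^k μ_{n+1-j}(Z), equals the minimum of Tr(ZP) over all orthogonal projections P ∈ M_n(ℂ) of rank k, and also equals the maximum of k·μ_n(A) − Tr(B) over all pairs of positive semidefinite matrices A, B with Z = A − B. -/
open scoped ComplexOrder

section Defs

variable {n : ℕ}

/-- eigenvalues of a Hermitian matrix listed in increasing order -/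
noncomputable def eigUp {A : Matrix (Fin n) (Fin n) ℂ} (hA : A.IsHermitian) : Fin n → ℝ :=
  fun i => hA.eigenvalues (Tuple.sort hA.eigenvalues i)

/-- eigenvalues of a Hermitian matrix listed in decreasing order: `eigDown hA i = μ_{i+1}(A)` -/
noncomputable def eigDown {A : Matrix (Fin n) (Fin n) ℂ} (hA : A.IsHermitian) : Fin n → ℝ :=
  fun i => eigUp hA i.rev

/-- the product of the `k` smallest eigenvalues, `∏_{j=1}^k μ_{n+1-j}(A)` -/
noncomputable def prodSmall (A : Matrix (Fin n) (Fin n) ℂ) (k : ℕ) : ℝ :=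
  if hA : A.IsHermitian then
    ∏ i ∈ Finset.univ.filter (fun i : Fin n => (i : ℕ) < k), eigUp hA i
  else 0

/-- the product of the `k` largest eigenvalues, `∏_{j=1}^k μ_j(A)` -/
noncomputable def prodLarge (A : Matrix (Fin n) (Fin n) ℂ) (k : ℕ) : ℝ :=
  if hA : A.IsHermitian then
    ∏ i ∈ Finset.univ.filter (fun i : Fin n => (i : ℕ) < k), eigDown hA i
  else 0

/-- the sum of the `k` smallest eigenvalues, `∑_{j=1}^k μ_{n+1-j}(A)` -/
noncomputable def sumSmall (A : Matrix (Fin n) (Fin n) ℂ) (k : ℕ) : ℝ :=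
  if hA : A.IsHermitian then
    ∑ i ∈ Finset.univ.filter (fun i : Fin n => (i : ℕ) < k), eigUp hA i
  else 0

/-- A doubly concave function on an interval `Ω ⊆ [0,∞)`. -/
structure DoublyConcaveOn (f : ℝ → ℝ) (Ω : Set ℝ) : Prop where
  subset_Ici : Ω ⊆ Set.Ici (0 : ℝ)
  nonneg : ∀ x ∈ Ω, 0 ≤ f x
  continuousOn : ContinuousOn f Ω
  concaveOn : ConcaveOn ℝ Ω f
  geomConcave : ∀ x ∈ Ω, ∀ y ∈ Ω, Real.sqrt (f x * f y) ≤ f (Real.sqrt (x * y))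

/-- `𝔼_p(Z) := (𝔼(Z^p))^{1/p}` -/
noncomputable def Ep {n m : ℕ} (E : Matrix (Fin n) (Fin n) ℂ →ₗ[ℂ] Matrix (Fin m) (Fin m) ℂ)
    (p : ℝ) (Z : Matrix (Fin n) (Fin n) ℂ) : Matrix (Fin m) (Fin m) ℂ :=
  cfc (fun x : ℝ => x ^ (1 / p)) (E (cfc (fun x : ℝ => x ^ p) Z))

/-- the power `p`-mean `A β_p B := ((A^p + B^p)/2)^{1/p}` -/
noncomputable def betaP (p : ℝ) (A B : Matrix (Fin n) (Fin n) ℂ) : Matrix (Fin n) (Fin n) ℂ :=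
  cfc (fun x : ℝ => x ^ (1 / p))
    ((2 : ℂ)⁻¹ • (cfc (fun x : ℝ => x ^ p) A + cfc (fun x : ℝ => x ^ p) B))

noncomputable def sqrtM (A : Matrix (Fin n) (Fin n) ℂ) : Matrix (Fin n) (Fin n) ℂ :=
  cfc Real.sqrt A

noncomputable def invSqrtM (A : Matrix (Fin n) (Fin n) ℂ) : Matrix (Fin n) (Fin n) ℂ :=
  cfc (fun x : ℝ => (Real.sqrt x)⁻¹) A

/-- operator mean with representing function `h`: `A σ B = A^{1/2} h(A^{-1/2} B A^{-1/2}) A^{1/2}` -/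
noncomputable def opMean (h : ℝ → ℝ) (A B : Matrix (Fin n) (Fin n) ℂ) :
    Matrix (Fin n) (Fin n) ℂ :=
  sqrtM A * cfc h (invSqrtM A * B * invSqrtM A) * sqrtM A

/-- the weighted geometric mean `A #_α B` -/
noncomputable def sharp (α : ℝ) (A B : Matrix (Fin n) (Fin n) ℂ) : Matrix (Fin n) (Fin n) ℂ :=
  sqrtM A * cfc (fun x : ℝ => x ^ α) (invSqrtM A * B * invSqrtM A) * sqrtM A

/-- the (real) determinant of a Hermitian matrix -/
noncomputable def rdet (A : Matrix (Fin n) (Fin n) ℂ) : ℝ := (A.det).re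

open Classical in
/-- the derived anti-norm `‖A‖_! = ‖A^{-p}‖^{-1/p}` for invertible positive `A`, `0` otherwise. -/
noncomputable def derivedAntiNorm (N : Matrix (Fin n) (Fin n) ℂ → ℝ) (p : ℝ)
    (A : Matrix (Fin n) (Fin n) ℂ) : ℝ :=
  if IsUnit A.det then (N (cfc (fun x : ℝ => x ^ (-p)) A)) ^ (-(1 / p)) else 0

end Defs

/-- the smallest eigenvalue of a Hermitian matrix -/
noncomputable def minEig {n : ℕ} (A : Matrix (Fin n) (Fin n) ℂ) : ℝ :=
  if hA : A.IsHermitian then ⨅ i, hA.eigenvalues i else 0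

namespace Matrix

variable {ι : Type*} [Fintype ι] [DecidableEq ι]

/-- The matrix with eigenvalues `f` in the eigenvector basis of the Hermitian matrix `A`. -/
noncomputable def IsHermitian.spectralMap {A : Matrix ι ι ℂ} (hA : A.IsHermitian) (f : ι → ℝ) :
    Matrix ι ι ℂ :=
  (hA.eigenvectorUnitary : Matrix ι ι ℂ) * diagonal (fun i => (f i : ℂ)) *
    (hA.eigenvectorUnitary : Matrix ι ι ℂ)ᴴ

namespace IsHermitian

variable {A : Matrix ι ι ℂ} (hA : A.IsHermitian)

lemma conjTranspose_eigenvectorUnitary_mul_self :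
    (hA.eigenvectorUnitary : Matrix ι ι ℂ)ᴴ * (hA.eigenvectorUnitary : Matrix ι ι ℂ) = 1 :=
  Unitary.coe_star_mul_self hA.eigenvectorUnitary

lemma spectralMap_eigenvalues : hA.spectralMap hA.eigenvalues = A :=
  hA.spectral_theorem.symm

lemma spectralMap_const (c : ℝ) : hA.spectralMap (fun _ => c) = (c : ℂ) • 1 := by
  have h : (hA.eigenvectorUnitary : Matrix ι ι ℂ) * (hA.eigenvectorUnitary : Matrix ι ι ℂ)ᴴ = 1 :=
    Unitary.coe_mul_star_self hA.eigenvectorUnitary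
  rw [spectralMap, ← smul_one_eq_diagonal, mul_smul_comm, smul_mul_assoc, mul_one, h]

lemma spectralMap_sub (f g : ι → ℝ) :
    hA.spectralMap (fun i => f i - g i) = hA.spectralMap f - hA.spectralMap g := by
  simp only [spectralMap, Complex.ofReal_sub, ← diagonal_sub, mul_sub, sub_mul]

lemma spectralMap_mul (f g : ι → ℝ) :
    hA.spectralMap f * hA.spectralMap g = hA.spectralMap (fun i => f i * g i) := by
  simp only [spectralMap, Complex.ofReal_mul, ← diagonal_mul_diagonal, mul_assoc]
  rw [← mul_assoc _ᴴ, conjTranspose_eigenvectorUnitary_mul_self, one_mul]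

lemma trace_spectralMap (f : ι → ℝ) : (hA.spectralMap f).trace = ((∑ i, f i : ℝ) : ℂ) := by
  rw [spectralMap, trace_mul_comm, ← mul_assoc, conjTranspose_eigenvectorUnitary_mul_self,
    one_mul, trace_diagonal, Complex.ofReal_sum]

lemma posSemidef_spectralMap {f : ι → ℝ} (hf : ∀ i, 0 ≤ f i) : (hA.spectralMap f).PosSemidef :=
  (PosSemidef.diagonal fun i => Complex.zero_le_real.mpr (hf i)).mul_mul_conjTranspose_same _

end IsHermitian

lemma trace_eq_rank_of_mul_self_eq {P : Matrix ι ι ℂ} (hP : P * P = P) :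
    P.trace = (P.rank : ℂ) := by
  have hproj : LinearMap.IsProj (LinearMap.range P.toLin') P.toLin' := by
    refine ⟨fun x => LinearMap.mem_range_self _ x, ?_⟩
    rintro _ ⟨y, rfl⟩
    rw [← toLin'_mul_apply, hP]
  rw [← trace_toLin'_eq, hproj.trace, Matrix.rank, ← toLin'_apply']

/-- The trace of the product of a positive semidefinite matrix and a projection is nonnegative. -/
lemma PosSemidef.re_trace_mul_nonneg {κ : Type*} [Fintype κ] {X P : Matrix κ κ ℂ} (hX : X.PosSemidef)
    (hP : P.IsHermitian) (hPP : P * P = P) : 0 ≤ ((X * P).trace).re := by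
  have h : (P * X * Pᴴ).trace = (X * P).trace := by
    rw [hP.eq, mul_assoc, trace_mul_comm, mul_assoc, hPP]
  rw [← h]
  exact (Complex.nonneg_iff.mp (hX.mul_mul_conjTranspose_same P).trace_nonneg).1

end Matrix

open Matrix

lemma posSemidef_sub_minEig {n : ℕ} {A : Matrix (Fin n) (Fin n) ℂ} (hA : A.IsHermitian) :
    (A - (minEig A : ℂ) • (1 : Matrix (Fin n) (Fin n) ℂ)).PosSemidef := by
  have h := hA.spectralMap_sub hA.eigenvalues (fun _ => minEig A)
  rw [hA.spectralMap_eigenvalues, hA.spectralMap_const] at h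
  rw [← h]
  refine hA.posSemidef_spectralMap fun i => sub_nonneg.mpr ?_
  rw [minEig, dif_pos hA]
  exact ciInf_le (Set.finite_range _).bddBelow i

lemma le_minEig {n : ℕ} [NeZero n] {A : Matrix (Fin n) (Fin n) ℂ} (hA : A.IsHermitian) {c : ℝ}
    (h : (A - (c : ℂ) • (1 : Matrix (Fin n) (Fin n) ℂ)).PosSemidef) : c ≤ minEig A := by
  rw [minEig, dif_pos hA]
  refine le_ciInf fun i => ?_
  have hv := (Complex.nonneg_iff.mp
    (h.dotProduct_mulVec_nonneg (hA.eigenvectorBasis i).ofLp)).1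
  have hnorm : star (hA.eigenvectorBasis i).ofLp ⬝ᵥ (hA.eigenvectorBasis i).ofLp = 1 := by
    rw [dotProduct_comm, ← EuclideanSpace.inner_eq_star_dotProduct, inner_self_eq_norm_sq_to_K,
      hA.eigenvectorBasis.orthonormal.1 i]
    simp
  rw [sub_mulVec, dotProduct_sub, smul_mulVec, one_mulVec, dotProduct_smul, hnorm,
    Complex.sub_re] at hv
  have he := hA.eigenvalues_eq i
  simp only [RCLike.re_to_complex] at he
  rw [he]
  simpa using hv

/-- Weak duality between the two variational formulas. -/
lemma minEig_sub_trace_le_trace_mul {n : ℕ} {A B P : Matrix (Fin n) (Fin n) ℂ}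
    (hA : A.PosSemidef) (hB : B.PosSemidef) (hP : P.IsHermitian) (hPP : P * P = P) :
    P.rank * minEig A - (B.trace).re ≤ (((A - B) * P).trace).re := by
  have h₁ := (posSemidef_sub_minEig hA.1).re_trace_mul_nonneg hP hPP
  have h₂ : 0 ≤ ((B * (1 - P)).trace).re :=
    hB.re_trace_mul_nonneg (isHermitian_one.sub hP) (by simp [mul_sub, sub_mul, hPP])
  rw [sub_mul, smul_mul, one_mul, trace_sub, trace_smul, trace_eq_rank_of_mul_self_eq hPP] at h₁
  rw [mul_sub, mul_one, trace_sub] at h₂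
  rw [sub_mul, trace_sub]
  simp only [Complex.sub_re, smul_eq_mul, Complex.mul_re, Complex.ofReal_re, Complex.ofReal_im,
    Complex.natCast_re, zero_mul, sub_zero] at h₁ h₂ ⊢
  linarith

/-- The spectral projection on the `k` smallest eigenvalues attains `sumSmall`. -/
lemma exists_projection_trace_eq_sumSmall {n : ℕ} {Z : Matrix (Fin n) (Fin n) ℂ}
    (hZ : Z.IsHermitian) {k : ℕ} (hkn : k ≤ n) :
    ∃ P : Matrix (Fin n) (Fin n) ℂ,
      P.IsHermitian ∧ P * P = P ∧ P.rank = k ∧ sumSmall Z k = ((Z * P).trace).re := by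
  set σ := Tuple.sort hZ.eigenvalues with hσ
  let f : Fin n → ℝ := fun i => if (σ.symm i : ℕ) < k then 1 else 0
  have hPP : hZ.spectralMap f * hZ.spectralMap f = hZ.spectralMap f := by
    rw [hZ.spectralMap_mul]
    congr 1
    ext i
    simp [f]
  refine ⟨hZ.spectralMap f, (hZ.posSemidef_spectralMap fun i => ?_).1, hPP, ?_, ?_⟩
  · simp only [f]
    positivity
  · have h := trace_eq_rank_of_mul_self_eq hPP
    rw [hZ.trace_spectralMap, ← Equiv.sum_comp σ] at h
    have hsum : ∑ i, f (σ i) = k := by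
      simp [f, Fin.card_filter_val_lt, hkn]
    rw [hsum] at h
    exact_mod_cast h.symm
  · have h := hZ.spectralMap_mul hZ.eigenvalues f
    rw [hZ.spectralMap_eigenvalues] at h
    rw [h, hZ.trace_spectralMap, Complex.ofReal_re, ← Equiv.sum_comp σ, sumSmall, dif_pos hZ,
      Finset.sum_filter]
    simp [f, eigUp, hσ]

/-- Truncating the spectrum from below at the `k`-th smallest eigenvalue yields a decomposition
whose dual value is at least `sumSmall`. -/
lemma exists_sumSmall_le_minEig_sub_trace {n : ℕ} {Z : Matrix (Fin n) (Fin n) ℂ}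
    (hZ : Z.PosSemidef) {k : ℕ} (hk1 : 1 ≤ k) (hkn : k ≤ n) :
    ∃ A B : Matrix (Fin n) (Fin n) ℂ, A.PosSemidef ∧ B.PosSemidef ∧ Z = A - B ∧
      sumSmall Z k ≤ k * minEig A - (B.trace).re := by
  have : NeZero n := ⟨by omega⟩
  have hH := hZ.1
  have hmono : Monotone (eigUp hH) := Tuple.monotone_sort _
  let j : Fin n := ⟨k - 1, by omega⟩
  let c := eigUp hH j
  let g : Fin n → ℝ := fun i => max (hH.eigenvalues i) c
  have hA : (hH.spectralMap g).PosSemidef :=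
    hH.posSemidef_spectralMap fun i => le_max_of_le_left (hZ.eigenvalues_nonneg i)
  refine ⟨hH.spectralMap g, hH.spectralMap (fun i => g i - hH.eigenvalues i), hA,
    hH.posSemidef_spectralMap fun i => sub_nonneg.mpr (le_max_left _ _), ?_, ?_⟩
  · rw [hH.spectralMap_sub, hH.spectralMap_eigenvalues, sub_sub_cancel]
  have hmin : c ≤ minEig (hH.spectralMap g) := by
    refine le_minEig hA.1 ?_
    rw [← hH.spectralMap_const c, ← hH.spectralMap_sub]
    exact hH.posSemidef_spectralMap fun i => sub_nonneg.mpr (le_max_right _ _)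
  have htrace : ∑ i, (g i - hH.eigenvalues i) =
      ∑ i : Fin n, if (i : ℕ) < k then c - eigUp hH i else 0 := by
    rw [← Equiv.sum_comp (Tuple.sort hH.eigenvalues)]
    refine Finset.sum_congr rfl fun i _ => ?_
    change max (eigUp hH i) c - eigUp hH i = _
    split_ifs with hi
    · rw [max_eq_right (hmono (Fin.le_def.mpr (by simp only [j]; omega)))]
    · rw [max_eq_left (hmono (Fin.le_def.mpr (by simp only [j]; omega))), sub_self]
  rw [hH.trace_spectralMap, Complex.ofReal_re, htrace, ← Finset.sum_filter,
    Finset.sum_sub_distrib, sumSmall, dif_pos hH]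
  have hcard : ∑ _i ∈ Finset.univ.filter (fun i : Fin n => (i : ℕ) < k), c = k * c := by
    simp [Fin.card_filter_val_lt, hkn]
  rw [hcard]
  have := mul_le_mul_of_nonneg_left hmin (Nat.cast_nonneg (α := ℝ) k)
  linarith

theorem stmt_17 {n : ℕ} (Z : Matrix (Fin n) (Fin n) ℂ) (hZ : Z.PosSemidef)
    (k : ℕ) (hk1 : 1 ≤ k) (hkn : k ≤ n) :
    IsLeast {t : ℝ | ∃ P : Matrix (Fin n) (Fin n) ℂ,
        P.IsHermitian ∧ P * P = P ∧ P.rank = k ∧ t = ((Z * P).trace).re} (sumSmall Z k) ∧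
    IsGreatest {t : ℝ | ∃ A B : Matrix (Fin n) (Fin n) ℂ,
        A.PosSemidef ∧ B.PosSemidef ∧ Z = A - B ∧ t = k * minEig A - (B.trace).re}
      (sumSmall Z k) := by
  obtain ⟨P, hP, hPP, hPk, hPt⟩ := exists_projection_trace_eq_sumSmall hZ.1 hkn
  obtain ⟨A, B, hA, hB, hZAB, hABt⟩ := exists_sumSmall_le_minEig_sub_trace hZ hk1 hkn
  have hupper : ∀ A B : Matrix (Fin n) (Fin n) ℂ, A.PosSemidef → B.PosSemidef → Z = A - B →
      k * minEig A - (B.trace).re ≤ sumSmall Z k := by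
    intro A B hA hB hZAB
    rw [hPt, hZAB, ← hPk]
    exact minEig_sub_trace_le_trace_mul hA hB hP hPP
  refine ⟨⟨⟨P, hP, hPP, hPk, hPt⟩, ?_⟩,
    ⟨⟨A, B, hA, hB, hZAB, hABt.antisymm (hupper A B hA hB hZAB)⟩, ?_⟩⟩
  · rintro t ⟨Q, hQ, hQQ, hQk, rfl⟩
    refine hABt.trans ?_
    rw [hZAB, ← hQk]
    exact minEig_sub_trace_le_trace_mul hA hB hQ hQQ
  · rintro t ⟨A', B', hA', hB', hZAB', rfl⟩
    exact hupper A' B' hA' hB' hZAB'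
end

section
/- Let A, Z be n×n positive semidefinite complex matrices and assume every diagonal entry of A is greater than or equal to 1. Then the Schur (entrywise) product A ∘ Z supermajorizes Z: for every k = 1,…,n, the sum of the k smallest eigenvalues of A ∘ Z is at least the sum of the k smallest eigenvalues of Z, i.e. ∑_{j=1}^k μ_{n+1-j}(A ∘ Z) ≥ ∑_{j=1}^k μ_{n+1-j}(Z). -/
open scoped ComplexOrder

open Matrix

/-- Among weights in `[0, 1]` of total mass `k`, the weighted sum of an increasing sequence is
smallest when the mass sits on the first `k` terms. -/
lemma sum_filter_lt_le_sum_mul {n k : ℕ} (hk : k ≤ n) {f g : Fin n → ℝ} (hf : Monotone f)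
    (hg0 : ∀ i, 0 ≤ g i) (hg1 : ∀ i, g i ≤ 1) (hg : ∑ i, g i = k) :
    ∑ i ∈ Finset.univ.filter (fun i : Fin n => (i : ℕ) < k), f i ≤ ∑ i, g i * f i := by
  obtain rfl | hpos := Nat.eq_zero_or_pos k
  · have h : ∀ i, g i = 0 := by
      simpa [Finset.sum_eq_zero_iff_of_nonneg fun i _ => hg0 i] using hg
    simp [h]
  set t := f ⟨k - 1, by omega⟩
  have hcard : ∑ i : Fin n, (if (i : ℕ) < k then (1 : ℝ) else 0) = k := by
    rw [Finset.sum_boole, Fin.card_filter_val_lt, min_eq_right hk]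
  have hterm : ∀ i : Fin n, 0 ≤ (g i - if (i : ℕ) < k then (1 : ℝ) else 0) * (f i - t) := by
    intro i
    split_ifs with hi
    · have : f i ≤ t := hf (Fin.mk_le_mk.2 (by omega) : i ≤ ⟨k - 1, _⟩)
      exact mul_nonneg_of_nonpos_of_nonpos (by linarith [hg1 i]) (by linarith)
    · have : t ≤ f i := hf (Fin.mk_le_mk.2 (by omega) : ⟨k - 1, _⟩ ≤ i)
      exact mul_nonneg (by linarith [hg0 i]) (by linarith)
  have hsum := Finset.sum_nonneg fun i (_ : i ∈ Finset.univ) => hterm i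
  simp only [mul_sub, Finset.sum_sub_distrib, ← Finset.sum_mul, hg, hcard, sub_self, zero_mul,
    sub_zero] at hsum
  simp only [sub_mul, Finset.sum_sub_distrib, ite_mul, one_mul, zero_mul,
    ← Finset.sum_filter] at hsum
  linarith

namespace Matrix

variable {m n : Type*} [Fintype m] [Fintype n]

open scoped MatrixOrder Matrix.Norms.L2Operator in
lemma PosSemidef.trace_mul_nonneg {A B : Matrix n n ℂ} (hA : A.PosSemidef) (hB : B.PosSemidef) :
    0 ≤ (A * B).trace := by
  classical
  obtain ⟨C, rfl⟩ := CStarAlgebra.nonneg_iff_eq_star_mul_self.1 hA.nonneg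
  rw [Matrix.mul_assoc, trace_mul_comm]
  exact (hB.mul_mul_conjTranspose_same C).trace_nonneg

lemma trace_mul_hadamard (R C Z : Matrix n n ℂ) :
    (R * (C ⊙ Z)).trace = ((Cᵀ ⊙ R) * Z).trace := by
  simp only [trace, diag, mul_apply, hadamard_apply, transpose_apply]
  exact Finset.sum_congr rfl fun i _ => Finset.sum_congr rfl fun j _ => by ring

lemma PosSemidef.of_isHermitian_of_idempotent {P : Matrix n n ℂ} (hP : P.IsHermitian)
    (hPP : P * P = P) : P.PosSemidef := by
  have h := posSemidef_conjTranspose_mul_self P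
  rwa [hP.eq, hPP] at h

/-- If `Xᴴ * X ≥ 1`, then `X * Xᴴ` dominates the orthogonal projection onto the range of `X`. -/
lemma exists_le_self_mul_conjTranspose [DecidableEq m] [DecidableEq n] {X : Matrix n m ℂ}
    (hX : (Xᴴ * X - 1).PosSemidef) :
    ∃ R : Matrix n n ℂ, R.PosSemidef ∧ (1 - R).PosSemidef ∧ R.trace = Fintype.card m ∧
      (X * Xᴴ - R).PosSemidef := by
  set M := Xᴴ * X with hM
  have hMpos : M.PosDef := by
    simpa using PosDef.posSemidef_add hX PosDef.one
  have hMu : IsUnit M.det := (isUnit_iff_isUnit_det M).1 hMpos.isUnit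
  have hI : M⁻¹ᴴ = M⁻¹ := hMpos.inv.isHermitian.eq
  have hMI : M * M⁻¹ = 1 := mul_nonsing_inv M hMu
  have hIM : M⁻¹ * M = 1 := nonsing_inv_mul M hMu
  set R := X * M⁻¹ * Xᴴ with hR
  have hRH : R.IsHermitian := by
    simp [IsHermitian, hR, conjTranspose_mul, hI, Matrix.mul_assoc]
  have hRR : R * R = R := by
    calc R * R = X * (M⁻¹ * (Xᴴ * X)) * M⁻¹ * Xᴴ := by simp only [hR, Matrix.mul_assoc]
      _ = R := by rw [← hM, hIM, Matrix.mul_one]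
  refine ⟨R, .of_isHermitian_of_idempotent hRH hRR,
    .of_isHermitian_of_idempotent (isHermitian_one.sub hRH) ?_, ?_, ?_⟩
  · simp [Matrix.mul_sub, Matrix.sub_mul, hRR]
  · rw [hR, trace_mul_comm, ← Matrix.mul_assoc, ← hM, hMI, trace_one]
  · have hS : ((M - 1)ᴴ * (M - 1) + (M - 1)).PosSemidef :=
      (posSemidef_conjTranspose_mul_self (M - 1)).add hX
    have h := hS.mul_mul_conjTranspose_same (X * M⁻¹)
    rw [hX.isHermitian.eq, conjTranspose_mul, hI] at h
    convert h using 1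
    have hfac : M⁻¹ * ((M - 1) * (M - 1) + (M - 1)) * M⁻¹ = 1 - M⁻¹ := by
      have : (M - 1) * (M - 1) + (M - 1) = M * (M - 1) := by noncomm_ring
      rw [this, ← Matrix.mul_assoc, hIM, Matrix.one_mul, Matrix.sub_mul, hMI, Matrix.one_mul]
    calc X * Xᴴ - R = X * (1 - M⁻¹) * Xᴴ := by
          rw [hR, Matrix.mul_sub, Matrix.sub_mul, Matrix.mul_one]
      _ = _ := by rw [← hfac]; simp only [Matrix.mul_assoc]

end Matrix

lemma eigUp_monotone {n : ℕ} {B : Matrix (Fin n) (Fin n) ℂ} (hB : B.IsHermitian) :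
    Monotone (eigUp hB) :=
  Tuple.monotone_sort hB.eigenvalues

lemma exists_conjTranspose_mul_mul_eq_diagonal_eigUp {n : ℕ} {B : Matrix (Fin n) (Fin n) ℂ}
    (hB : B.IsHermitian) :
    ∃ V : Matrix (Fin n) (Fin n) ℂ, Vᴴ * V = 1 ∧ V * Vᴴ = 1 ∧
      Vᴴ * B * V = diagonal fun i => (eigUp hB i : ℂ) := by
  set U : Matrix (Fin n) (Fin n) ℂ := hB.eigenvectorUnitary.1
  set σ := Tuple.sort hB.eigenvalues
  have hUU : Uᴴ * U = 1 := Unitary.coe_star_mul_self hB.eigenvectorUnitary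
  have hdiag : Uᴴ * B * U = diagonal (RCLike.ofReal ∘ hB.eigenvalues) := by
    have h := hB.conjStarAlgAut_star_eigenvectorUnitary
    rwa [Unitary.conjStarAlgAut_star_apply] at h
  have hVV : (U.submatrix id σ)ᴴ * U.submatrix id σ = 1 := by
    rw [conjTranspose_submatrix, ← submatrix_mul _ _ σ id σ Function.bijective_id, hUU,
      submatrix_one_equiv]
  refine ⟨U.submatrix id σ, hVV, mul_eq_one_comm.1 hVV, ?_⟩
  have h : (Uᴴ * B * U).submatrix σ σ = (U.submatrix id σ)ᴴ * B * U.submatrix id σ := by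
    rw [submatrix_mul _ _ σ id σ Function.bijective_id,
      submatrix_mul _ _ σ id id Function.bijective_id, conjTranspose_submatrix, submatrix_id_id]
  rw [← h, hdiag, submatrix_diagonal_equiv]
  rfl

lemma exists_isometry_trace_eq_sumSmall {n : ℕ} {B : Matrix (Fin n) (Fin n) ℂ}
    (hB : B.IsHermitian) {k : ℕ} (hk : k ≤ n) :
    ∃ U : Matrix (Fin n) (Fin k) ℂ, Uᴴ * U = 1 ∧ (Uᴴ * B * U).trace = sumSmall B k := by
  obtain ⟨V, hVV, -, hdiag⟩ := exists_conjTranspose_mul_mul_eq_diagonal_eigUp hB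
  set e : Fin k → Fin n := Fin.castLE hk
  have hinj : Function.Injective e := Fin.castLE_injective hk
  refine ⟨V.submatrix id e, ?_, ?_⟩
  · rw [conjTranspose_submatrix, ← submatrix_mul _ _ e id e Function.bijective_id, hVV,
      submatrix_one e hinj]
  · have h : (Vᴴ * B * V).submatrix e e = (V.submatrix id e)ᴴ * B * V.submatrix id e := by
      rw [submatrix_mul _ _ e id e Function.bijective_id,
        submatrix_mul _ _ e id id Function.bijective_id, conjTranspose_submatrix, submatrix_id_id]
    rw [← h, hdiag, submatrix_diagonal _ e hinj, trace_diagonal, sumSmall, dif_pos hB]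
    push_cast
    have himage : Finset.univ.filter (fun i : Fin n => (i : ℕ) < k) = Finset.univ.image e := by
      ext i
      simp only [Finset.mem_filter, Finset.mem_univ, true_and, Finset.mem_image]
      exact ⟨fun hi => ⟨⟨i, hi⟩, rfl⟩, fun ⟨j, hj⟩ => hj ▸ j.2⟩
    rw [himage, Finset.sum_image hinj.injOn]
    rfl

/-- Ky Fan's minimum principle for contractive weights. -/
lemma sumSmall_le_re_trace_mul {n : ℕ} {Z G : Matrix (Fin n) (Fin n) ℂ} (hZ : Z.IsHermitian)
    (hG : G.PosSemidef) (hG1 : (1 - G).PosSemidef) {k : ℕ} (hk : k ≤ n) (htr : G.trace = k) :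
    sumSmall Z k ≤ (G * Z).trace.re := by
  obtain ⟨V, hVV, hVV', hdiag⟩ := exists_conjTranspose_mul_mul_eq_diagonal_eigUp hZ
  have hW := hG.conjTranspose_mul_mul_same V
  have hW1 := hG1.conjTranspose_mul_mul_same V
  rw [Matrix.mul_sub, Matrix.mul_one, Matrix.sub_mul, hVV] at hW1
  have htrW : (Vᴴ * G * V).trace = k := by
    rw [trace_mul_comm, ← Matrix.mul_assoc, hVV', Matrix.one_mul, htr]
  have htrace : (G * Z).trace = (Vᴴ * G * V * (Vᴴ * Z * V)).trace := by
    have : Vᴴ * G * V * (Vᴴ * Z * V) = Vᴴ * (G * (V * Vᴴ) * Z * V) := by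
      simp only [Matrix.mul_assoc]
    rw [this, hVV', Matrix.mul_one, trace_mul_comm Vᴴ, Matrix.mul_assoc _ V, hVV',
      Matrix.mul_one]
  set W := Vᴴ * G * V
  rw [htrace, hdiag, sumSmall, dif_pos hZ]
  have hre : (W * diagonal fun i => (eigUp hZ i : ℂ)).trace.re
      = ∑ i, (W i i).re * eigUp hZ i := by
    simp [trace, mul_diagonal]
  rw [hre]
  refine sum_filter_lt_le_sum_mul hk (eigUp_monotone hZ) (fun i => ?_) (fun i => ?_) ?_
  · exact (Complex.le_def.1 (hW.diag_nonneg (i := i))).1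
  · have h := (Complex.le_def.1 (hW1.diag_nonneg (i := i))).1
    simpa using h
  · have h := congrArg Complex.re htrW
    simpa [trace] using h

/-- The Schur product of `Z` with a correlation matrix, compressed to a contractive weight. -/
lemma sumSmall_le_re_trace_mul_hadamard {n : ℕ} {C Z R : Matrix (Fin n) (Fin n) ℂ}
    (hC : C.PosSemidef) (hC1 : ∀ i, C i i = 1) (hZ : Z.IsHermitian) (hR : R.PosSemidef)
    (hR1 : (1 - R).PosSemidef) {k : ℕ} (hk : k ≤ n) (htr : R.trace = k) :
    sumSmall Z k ≤ (R * (C ⊙ Z)).trace.re := by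
  rw [trace_mul_hadamard]
  refine sumSmall_le_re_trace_mul hZ (hC.transpose.hadamard hR) ?_ hk ?_
  · have h := hC.transpose.hadamard hR1
    have hsub : Cᵀ ⊙ (1 - R) = Cᵀ ⊙ 1 - Cᵀ ⊙ R := by
      ext i j
      simp [mul_sub]
    rwa [hsub, hadamard_one_eq_one_iff.2 (by ext i; simp [hC1])] at h
  · rw [← htr]
    simp [trace, hC1]

theorem stmt_18 {n : ℕ} (A Z : Matrix (Fin n) (Fin n) ℂ) (hA : A.PosSemidef) (hZ : Z.PosSemidef)
    (hdiag : ∀ i : Fin n, (1 : ℂ) ≤ A i i) :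
    ∀ k : ℕ, 1 ≤ k → k ≤ n → sumSmall Z k ≤ sumSmall (Matrix.hadamard A Z) k := by
  intro k _ hk
  set s : Fin n → ℝ := fun i => Real.sqrt (A i i).re
  have hre : ∀ i, 1 ≤ (A i i).re := fun i => (Complex.le_def.1 (hdiag i)).1
  have hAii : ∀ i, A i i = (s i : ℂ) * s i := fun i => by
    rw [← Complex.ofReal_mul, Real.mul_self_sqrt (by linarith [hre i])]
    exact Complex.ext rfl (by simpa using (Complex.le_def.1 (hdiag i)).2.symm)
  have hs0 : ∀ i, (s i : ℂ) ≠ 0 := fun i => by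
    exact_mod_cast (Real.sqrt_pos.2 (by linarith [hre i])).ne'
  set D : Matrix (Fin n) (Fin n) ℂ := diagonal fun i => (s i : ℂ) with hD
  set E : Matrix (Fin n) (Fin n) ℂ := diagonal fun i => (s i : ℂ)⁻¹ with hE
  have hDH : Dᴴ = D := by
    rw [hD, diagonal_conjTranspose]; congr 1; ext i; simp
  have hEH : Eᴴ = E := by
    rw [hE, diagonal_conjTranspose]; congr 1; ext i; simp
  have hC : (E * A * E).PosSemidef := by
    simpa only [hEH] using hA.mul_mul_conjTranspose_same E
  have hC1 : ∀ i, (E * A * E) i i = 1 := fun i => by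
    rw [hE, mul_diagonal, diagonal_mul, hAii]
    field_simp [hs0 i]
  have hfac : A ⊙ Z = D * ((E * A * E) ⊙ Z) * D := by
    ext i j
    rw [hD, hE, mul_diagonal, diagonal_mul, hadamard_apply, hadamard_apply, mul_diagonal,
      diagonal_mul]
    field_simp [hs0 i, hs0 j]
  have hW := hC.hadamard hZ
  obtain ⟨U, hUU, htrU⟩ := exists_isometry_trace_eq_sumSmall (hA.hadamard hZ).isHermitian hk
  have hDD : (D * D - 1).PosSemidef := by
    rw [hD, diagonal_mul_diagonal, ← diagonal_one, diagonal_sub]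
    refine PosSemidef.diagonal fun i => ?_
    simpa [← hAii] using hdiag i
  have hX : ((D * U)ᴴ * (D * U) - 1).PosSemidef := by
    have h := hDD.conjTranspose_mul_mul_same U
    rw [Matrix.mul_sub, Matrix.sub_mul, Matrix.mul_one, hUU] at h
    simpa only [conjTranspose_mul, hDH, Matrix.mul_assoc] using h
  obtain ⟨R, hR, hR1, htr, hXR⟩ := exists_le_self_mul_conjTranspose hX
  rw [Fintype.card_fin] at htr
  have hle := (Complex.le_def.1 (hXR.trace_mul_nonneg hW)).1
  rw [Matrix.sub_mul, trace_sub, Complex.sub_re, Complex.zero_re] at hle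
  have htrX : (D * U * (D * U)ᴴ * ((E * A * E) ⊙ Z)).trace = sumSmall (A ⊙ Z) k := by
    rw [← htrU, hfac, Matrix.mul_assoc (D * U), trace_mul_comm, conjTranspose_mul, hDH]
    simp only [Matrix.mul_assoc]
  rw [htrX, Complex.ofReal_re] at hle
  linarith [sumSmall_le_re_trace_mul_hadamard hC hC1 hZ.isHermitian hR hR1 hk htr]
end
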